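/- arXiv:2004.14726 — 2 statements merged into one kernel-verified Lean document; each statement's English description precedes it below -/
import Mathlib

section
/- Let s ≥ 3 be an integer, q₀ = 2^s and q = 2q₀². For nonnegative integers a₁,a₂,a₃,a₄,f write σ = a₁+a₂+a₃+a₄+f and ν = a₁ + a₂q₀ + 2a₃q₀ + a₄q + fq², and let F₃ = {ν+(2n+1)q₀q+n+2 : 0≤n≤q₀−2, 0≤a₁≤q₀−2−n, 0≤a₂≤1, 0≤a₃≤q₀−1, 0≤a₄≤q₀−1, f≥0, σ=q−q₀−2−2nq₀+n}. Then |F₃| = q²/4 − q·q₀/2, i.e. 4·|F₃| = q² − 2q·q₀. -/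
/-- `ν = a₁ + a₂q₀ + 2a₃q₀ + a₄q + fq²`. -/
def nuF (q₀ q a₁ a₂ a₃ a₄ f : ℕ) : ℕ :=
  a₁ + a₂ * q₀ + 2 * a₃ * q₀ + a₄ * q + f * q ^ 2

/-- `F₃ = {ν+(2n+1)q₀q+n+2 : 0≤n≤q₀−2, 0≤a₁≤q₀−2−n, 0≤a₂≤1, 0≤a₃≤q₀−1,
0≤a₄≤q₀−1, f≥0, σ=q−q₀−2−2nq₀+n}`. -/
def F3 (q₀ q : ℕ) : Set ℕ :=
  {v | ∃ n a₁ a₂ a₃ a₄ f : ℕ,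
    n + 2 ≤ q₀ ∧ a₁ + n + 2 ≤ q₀ ∧ a₂ ≤ 1 ∧ a₃ + 1 ≤ q₀ ∧ a₄ + 1 ≤ q₀ ∧
    a₁ + a₂ + a₃ + a₄ + f + q₀ + 2 + 2 * n * q₀ = q + n ∧
    v = nuF q₀ q a₁ a₂ a₃ a₄ f + (2 * n + 1) * q₀ * q + n + 2}

/-!
Put `b = a₁ + n + 1`. Since `q = 2q₀²`, the element of `F₃` with parameters `n, a₁, …, a₄, f`
exceeds by one the number with mixed-radix digits `b, a₂, a₃, a₄, 2n + 1, f` for the radices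
`q₀, 2, q₀, q₀, 2q₀`, so it determines all its parameters. The condition on `σ` can always be
solved for `f`, and uniquely. Hence `|F₃|` is the number of choices of `n < b < q₀`, `a₂ < 2`,
`a₃ < q₀`, `a₄ < q₀`, which is `q₀(q₀ - 1)/2 · 2q₀²`.
-/

theorem add_mul_eq_add_mul_iff_of_lt {m a a' b b' : ℕ} (ha : a < m) (ha' : a' < m) :
    a + m * b = a' + m * b' ↔ a = a' ∧ b = b' := by
  refine ⟨fun h => ?_, by rintro ⟨rfl, rfl⟩; rfl⟩
  have hm : 0 < m := ha.pos
  obtain ⟨hdiv, hmod⟩ := (Nat.div_mod_unique hm).2 ⟨h, ha⟩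
  obtain ⟨hdiv', hmod'⟩ := (Nat.div_mod_unique hm).2 ⟨rfl, ha'⟩
  exact ⟨hmod.symm.trans hmod', hdiv.symm.trans hdiv'⟩

/-- The number with digits `b, a₂, a₃, a₄, e, f`, least significant first, in the mixed radix system
`q₀, 2, q₀, q₀, 2q₀`; the last digit `f` is unbounded. -/
def mixedRadix (q₀ b a₂ a₃ a₄ e f : ℕ) : ℕ :=
  b + q₀ * (a₂ + 2 * (a₃ + q₀ * (a₄ + q₀ * (e + 2 * q₀ * f))))

theorem mixedRadix_inj {q₀ b a₂ a₃ a₄ e f b' a₂' a₃' a₄' e' f' : ℕ}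
    (hb : b < q₀) (ha₂ : a₂ < 2) (ha₃ : a₃ < q₀) (ha₄ : a₄ < q₀) (he : e < 2 * q₀)
    (hb' : b' < q₀) (ha₂' : a₂' < 2) (ha₃' : a₃' < q₀) (ha₄' : a₄' < q₀) (he' : e' < 2 * q₀) :
    mixedRadix q₀ b a₂ a₃ a₄ e f = mixedRadix q₀ b' a₂' a₃' a₄' e' f' ↔
      b = b' ∧ a₂ = a₂' ∧ a₃ = a₃' ∧ a₄ = a₄' ∧ e = e' ∧ f = f' := by
  rw [mixedRadix, mixedRadix, add_mul_eq_add_mul_iff_of_lt hb hb',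
    add_mul_eq_add_mul_iff_of_lt ha₂ ha₂', add_mul_eq_add_mul_iff_of_lt ha₃ ha₃',
    add_mul_eq_add_mul_iff_of_lt ha₄ ha₄', add_mul_eq_add_mul_iff_of_lt he he']

theorem nuF_add_eq_mixedRadix_add_one (q₀ n a₁ a₂ a₃ a₄ f : ℕ) :
    nuF q₀ (2 * q₀ ^ 2) a₁ a₂ a₃ a₄ f + (2 * n + 1) * q₀ * (2 * q₀ ^ 2) + n + 2 =
      mixedRadix q₀ (a₁ + n + 1) a₂ a₃ a₄ (2 * n + 1) f + 1 := by
  unfold nuF mixedRadix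
  ring

/-- The index set of `F₃`: tuples `((b, n), a₂, a₃, a₄)` with `n < b < q₀`, `a₂ < 2`, `a₃ < q₀` and
`a₄ < q₀`, where `b` stands for `a₁ + n + 1`. -/
def F3Index (q₀ : ℕ) : Finset ((Σ _ : ℕ, ℕ) × ℕ × ℕ × ℕ) :=
  (Finset.range q₀).sigma Finset.range ×ˢ
    Finset.range 2 ×ˢ Finset.range q₀ ×ˢ Finset.range q₀

theorem mem_F3Index {q₀ b n a₂ a₃ a₄ : ℕ} :
    (⟨b, n⟩, a₂, a₃, a₄) ∈ F3Index q₀ ↔ (b < q₀ ∧ n < b) ∧ a₂ < 2 ∧ a₃ < q₀ ∧ a₄ < q₀ := by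
  simp only [F3Index, Finset.mem_product, Finset.mem_sigma, Finset.mem_range]

theorem card_F3Index (q₀ : ℕ) : (F3Index q₀).card = q₀.choose 2 * (2 * q₀ ^ 2) := by
  simp only [F3Index, Finset.card_product, Finset.card_sigma, Finset.card_range,
    Finset.sum_range_id, Nat.choose_two_right, sq]

/-- The value of `f` imposed by the condition `σ = q - q₀ - 2 - 2nq₀ + n`, where `q = 2q₀²` and
`a₁ = b - n - 1`. On `F3Index q₀` the subtraction does not truncate. -/
def F3TopDigit (q₀ b n a₂ a₃ a₄ : ℕ) : ℕ :=
  2 * q₀ ^ 2 + 2 * n - (b + a₂ + a₃ + a₄ + q₀ + 1 + 2 * n * q₀)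

theorem digits_add_le_two_mul_sq_add {q₀ b n a₂ a₃ a₄ : ℕ} (hb : b < q₀) (hn : n < b) (ha₂ : a₂ < 2)
    (ha₃ : a₃ < q₀) (ha₄ : a₄ < q₀) :
    b + a₂ + a₃ + a₄ + q₀ + 1 + 2 * n * q₀ ≤ 2 * q₀ ^ 2 + 2 * n := by
  obtain ⟨k, rfl⟩ : ∃ k, q₀ = n + 2 + k := Nat.exists_eq_add_of_le (by omega)
  calc b + a₂ + a₃ + a₄ + (n + 2 + k) + 1 + 2 * n * (n + 2 + k)
      ≤ 4 * (n + 2 + k) + 2 * n * (n + 2 + k) := by omega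
    _ ≤ 2 * (n + 2 + k) ^ 2 + 2 * n := by nlinarith [Nat.zero_le (k * n), Nat.zero_le (k * k)]

theorem sum_eq_iff_eq_F3TopDigit {q₀ n a₁ a₂ a₃ a₄ f : ℕ} (hb : a₁ + n + 1 < q₀) (ha₂ : a₂ < 2)
    (ha₃ : a₃ < q₀) (ha₄ : a₄ < q₀) :
    a₁ + a₂ + a₃ + a₄ + f + q₀ + 2 + 2 * n * q₀ = 2 * q₀ ^ 2 + n ↔
      f = F3TopDigit q₀ (a₁ + n + 1) n a₂ a₃ a₄ := by
  have hle := digits_add_le_two_mul_sq_add (n := n) hb (by omega) ha₂ ha₃ ha₄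
  unfold F3TopDigit
  omega

/-- The element of `F₃` with the given index. -/
def F3Elem (q₀ : ℕ) : (Σ _ : ℕ, ℕ) × ℕ × ℕ × ℕ → ℕ
  | (⟨b, n⟩, a₂, a₃, a₄) =>
    mixedRadix q₀ b a₂ a₃ a₄ (2 * n + 1) (F3TopDigit q₀ b n a₂ a₃ a₄) + 1

theorem F3_eq_image_F3Elem (q₀ : ℕ) :
    F3 q₀ (2 * q₀ ^ 2) = F3Elem q₀ '' F3Index q₀ := by
  ext v
  constructor
  · rintro ⟨n, a₁, a₂, a₃, a₄, f, -, ha₁, ha₂, ha₃, ha₄, hσ, rfl⟩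
    have hf := (sum_eq_iff_eq_F3TopDigit (by omega) (by omega) ha₃ ha₄).1 hσ
    refine ⟨(⟨a₁ + n + 1, n⟩, a₂, a₃, a₄), mem_F3Index.2 (by omega), ?_⟩
    rw [nuF_add_eq_mixedRadix_add_one, hf, F3Elem]
  · rintro ⟨⟨⟨b, n⟩, a₂, a₃, a₄⟩, hidx, rfl⟩
    obtain ⟨⟨hb, hn⟩, ha₂, ha₃, ha₄⟩ := mem_F3Index.1 hidx
    obtain ⟨a₁, rfl⟩ : ∃ a₁, b = a₁ + n + 1 := ⟨b - n - 1, by omega⟩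
    refine ⟨n, a₁, a₂, a₃, a₄, F3TopDigit q₀ (a₁ + n + 1) n a₂ a₃ a₄, by omega, by omega, by omega,
      ha₃, ha₄, (sum_eq_iff_eq_F3TopDigit hb ha₂ ha₃ ha₄).2 rfl, ?_⟩
    rw [nuF_add_eq_mixedRadix_add_one, F3Elem]

theorem injOn_F3Elem (q₀ : ℕ) : Set.InjOn (F3Elem q₀) (F3Index q₀) := by
  rintro ⟨⟨b, n⟩, a₂, a₃, a₄⟩ hidx ⟨⟨b', n'⟩, a₂', a₃', a₄'⟩ hidx' heq
  obtain ⟨⟨hb, hn⟩, ha₂, ha₃, ha₄⟩ := mem_F3Index.1 hidx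
  obtain ⟨⟨hb', hn'⟩, ha₂', ha₃', ha₄'⟩ := mem_F3Index.1 hidx'
  obtain ⟨rfl, rfl, rfl, rfl, he, -⟩ := (mixedRadix_inj hb ha₂ ha₃ ha₄ (by omega)
    hb' ha₂' ha₃' ha₄' (by omega)).1 (Nat.succ.inj heq)
  obtain rfl : n = n' := by omega
  rfl

theorem ncard_F3 (q₀ : ℕ) : (F3 q₀ (2 * q₀ ^ 2)).ncard = q₀.choose 2 * (2 * q₀ ^ 2) := by
  rw [F3_eq_image_F3Elem, (injOn_F3Elem q₀).ncard_image, Set.ncard_coe_finset, card_F3Index]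

theorem stmt_18_general (q₀ q : ℕ) (hq : q = 2 * q₀ ^ 2) :
    4 * (F3 q₀ q).ncard = q ^ 2 - 2 * q * q₀ := by
  subst hq
  have hchoose : q₀.choose 2 * 2 = q₀ * (q₀ - 1) := by
    rw [← Finset.sum_range_id_mul_two, Finset.sum_range_id, Nat.choose_two_right]
  calc 4 * (F3 q₀ (2 * q₀ ^ 2)).ncard
      = q₀.choose 2 * 2 * (4 * q₀ ^ 2) := by rw [ncard_F3]; ring
    _ = 4 * q₀ ^ 3 * (q₀ - 1) := by rw [hchoose]; ring
    _ = 4 * q₀ ^ 3 * q₀ - 4 * q₀ ^ 3 := Nat.mul_sub_one _ _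
    _ = (2 * q₀ ^ 2) ^ 2 - 2 * (2 * q₀ ^ 2) * q₀ := by ring_nf

/-- For `s ≥ 3`, the cardinality of `F₃` satisfies `4·|F₃| = q² − 2q·q₀`,
i.e. `|F₃| = q²/4 − q·q₀/2`. -/
theorem stmt_18 (s : ℕ) (hs : 3 ≤ s) (q₀ q : ℕ)
    (hq₀ : q₀ = 2 ^ s) (hq : q = 2 * q₀ ^ 2) :
    4 * (F3 q₀ q).ncard = q ^ 2 - 2 * q * q₀ :=
  stmt_18_general q₀ q hq
end

section
/- Let s ≥ 3 be an integer, q₀ = 2^s and q = 2q₀². For nonnegative integers a₁,a₂,a₃,a₄,f write σ = a₁+a₂+a₃+a₄+f and ν = a₁ + a₂q₀ + 2a₃q₀ + a₄q + fq², and let F₄ = {ν+(2n+2)q₀q+n+3 : 0≤n≤q₀−3, 0≤a₁≤q₀−3−n, 0≤a₂≤1, 0≤a₃≤q₀−1, 0≤a₄≤q₀−1, f≥0, σ=q−2q₀−2−2nq₀+n} and F₆ = {ν+q₀+(2n+2)q₀q+n+2 : a₁=0, a₂=0, 0≤n≤q₀−2, 0≤a₃≤n, 0≤a₄≤q₀−1,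 f≥0, σ=q−2q₀−2−2nq₀+n}. Then |F₄| = q²/4 − 3q·q₀/2 + q (i.e. 4·|F₄| = q² − 6q·q₀ + 4q) and |F₆| = q·q₀/4 − q/4 (i.e. 4·|F₆| = q·q₀ − q). -/
/-- `F₄ = {ν+(2n+2)q₀q+n+3 : 0≤n≤q₀−3, 0≤a₁≤q₀−3−n, 0≤a₂≤1, 0≤a₃≤q₀−1,
0≤a₄≤q₀−1, f≥0, σ=q−2q₀−2−2nq₀+n}`. -/
def F4 (q₀ q : ℕ) : Set ℕ :=
  {v | ∃ n a₁ a₂ a₃ a₄ f : ℕ,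
    n + 3 ≤ q₀ ∧ a₁ + n + 3 ≤ q₀ ∧ a₂ ≤ 1 ∧ a₃ + 1 ≤ q₀ ∧ a₄ + 1 ≤ q₀ ∧
    a₁ + a₂ + a₃ + a₄ + f + 2 * q₀ + 2 + 2 * n * q₀ = q + n ∧
    v = nuF q₀ q a₁ a₂ a₃ a₄ f + (2 * n + 2) * q₀ * q + n + 3}

/-- `F₆ = {ν+q₀+(2n+2)q₀q+n+2 : a₁=0, a₂=0, 0≤n≤q₀−2, 0≤a₃≤n, 0≤a₄≤q₀−1,
f≥0, σ=q−2q₀−2−2nq₀+n}`. -/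
def F6 (q₀ q : ℕ) : Set ℕ :=
  {v | ∃ n a₁ a₂ a₃ a₄ f : ℕ,
    a₁ = 0 ∧ a₂ = 0 ∧ n + 2 ≤ q₀ ∧ a₃ ≤ n ∧ a₄ + 1 ≤ q₀ ∧
    a₁ + a₂ + a₃ + a₄ + f + 2 * q₀ + 2 + 2 * n * q₀ = q + n ∧
    v = nuF q₀ q a₁ a₂ a₃ a₄ f + q₀ + (2 * n + 2) * q₀ * q + n + 2}

/-!
The elements of both families have the shape
`1 + b + q₀ * a₂ + 2 * q₀ * a₃ + q * d + q * q₀ * (2 * n + 2) + q ^ 2 * f` with `b, a₃, d < q₀`,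
`a₂ < 2` and `2 * n + 2 < 2 * q₀`. Since `q = 2 * q₀ ^ 2`, this is a mixed radix expansion, so
`b, a₂, a₃, d, n` are determined by the value. In `F₄` one has `b = a₁ + n + 2`; an element of `F₆`
has `b = n + 1` and digit `1` in place of `a₂`, that is, formally `a₁ = -1` and `a₂ = 1`. As
`a₁ + a₂ = 0` for this choice, the condition on `σ` yields the same formula for `f` in both
families. It remains to count parameters: in each family two of them, `(a₁ + n, n)` or `(n, a₃)`,
range over a triangle and the others over intervals.
-/

open Finset

lemma eq_and_eq_of_add_mul_eq_add_mul {r a b x y : ℕ} (ha : a < r) (hb : b < r)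
    (h : a + r * x = b + r * y) : a = b ∧ x = y := by
  have hab : a = b := by
    simpa only [Nat.add_mul_mod_self_left, Nat.mod_eq_of_lt ha, Nat.mod_eq_of_lt hb]
      using congrArg (· % r) h
  subst hab
  exact ⟨rfl, Nat.eq_of_mul_eq_mul_left (Nat.zero_lt_of_lt ha) (Nat.add_left_cancel h)⟩

/-- The triangle of pairs `(i, j)` with `j ≤ i < m`, over which the two dependent parameters of
`F₄` and of `F₆` range. -/
def triangle (m : ℕ) : Finset (Σ _ : ℕ, ℕ) :=
  (range m).sigma fun i => range (i + 1)

lemma mem_triangle {m i j : ℕ} : (⟨i, j⟩ : Σ _ : ℕ, ℕ) ∈ triangle m ↔ i < m ∧ j ≤ i := by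
  simp only [triangle, mem_sigma, mem_range, Nat.lt_succ_iff]

lemma card_triangle_mul_two (m : ℕ) : #(triangle m) * 2 = (m + 1) * m := by
  have hcard : #(triangle m) = ∑ i ∈ range (m + 1), i := by
    simp only [triangle, card_sigma, card_range, sum_range_succ' (fun i => i) m, add_zero]
  rw [hcard, sum_range_id_mul_two, Nat.add_sub_cancel]

/-- The coefficient `f` of `q ^ 2`, for `q = 2 * q₀ ^ 2`, that the condition on `σ` forces on the
element with parameter `n` and digits `b, a₂, a₃, d`. The subtraction is not truncated for digits
in range, by `sum_digits_le`. -/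
def leadingCoeff (q₀ n b a₂ a₃ d : ℕ) : ℕ :=
  2 * q₀ ^ 2 + 2 * n - (b + a₂ + a₃ + d + 2 * q₀ + 2 * n * q₀)

/-- The common form of the elements of `F₄` and `F₆` for `q = 2 * q₀ ^ 2`, written as one more than
a nested mixed radix expansion. -/
def digitValue (q₀ n b a₂ a₃ d : ℕ) : ℕ :=
  1 + (b + q₀ * (a₂ + 2 * (a₃ + q₀ * (d + q₀ * (2 * n + 2 +
    2 * q₀ * leadingCoeff q₀ n b a₂ a₃ d)))))

section Digits

variable {q₀ n b a₂ a₃ d n' b' a₂' a₃' d' : ℕ}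

lemma sum_digits_le (hn : n + 2 ≤ q₀) (hb : b < q₀) (ha₂ : a₂ < 2) (ha₃ : a₃ < q₀) (hd : d < q₀) :
    b + a₂ + a₃ + d + 2 * q₀ + 2 * n * q₀ ≤ 2 * q₀ ^ 2 + 2 * n := by
  have hdigits : b + a₂ + a₃ + d + 2 ≤ 3 * q₀ := by omega
  obtain ⟨j, rfl⟩ := Nat.exists_eq_add_of_le hn
  nlinarith

lemma digitValue_inj (hn : n + 2 ≤ q₀) (hb : b < q₀) (ha₂ : a₂ < 2) (ha₃ : a₃ < q₀) (hd : d < q₀)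
    (hn' : n' + 2 ≤ q₀) (hb' : b' < q₀) (ha₂' : a₂' < 2) (ha₃' : a₃' < q₀) (hd' : d' < q₀)
    (h : digitValue q₀ n b a₂ a₃ d = digitValue q₀ n' b' a₂' a₃' d') :
    n = n' ∧ b = b' ∧ a₂ = a₂' ∧ a₃ = a₃' ∧ d = d' := by
  obtain ⟨b_eq, h⟩ := eq_and_eq_of_add_mul_eq_add_mul hb hb' (Nat.add_left_cancel h)
  obtain ⟨a₂_eq, h⟩ := eq_and_eq_of_add_mul_eq_add_mul ha₂ ha₂' h
  obtain ⟨a₃_eq, h⟩ := eq_and_eq_of_add_mul_eq_add_mul ha₃ ha₃' h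
  obtain ⟨d_eq, h⟩ := eq_and_eq_of_add_mul_eq_add_mul hd hd' h
  obtain ⟨n_eq, -⟩ := eq_and_eq_of_add_mul_eq_add_mul (by omega) (by omega) h
  exact ⟨by omega, b_eq, a₂_eq, a₃_eq, d_eq⟩

end Digits

/-- The parameters `((a₁ + n, n), a₂, a₃, a₄)` of `F₄`. -/
def F4Params (q₀ : ℕ) : Finset ((Σ _ : ℕ, ℕ) × ℕ × ℕ × ℕ) :=
  triangle (q₀ - 2) ×ˢ range 2 ×ˢ range q₀ ×ˢ range q₀

/-- The parameters `((n, a₃), a₄)` of `F₆`. -/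
def F6Params (q₀ : ℕ) : Finset ((Σ _ : ℕ, ℕ) × ℕ) :=
  triangle (q₀ - 1) ×ˢ range q₀

lemma mem_F4Params {q₀ t n a₂ a₃ a₄ : ℕ} :
    (⟨t, n⟩, a₂, a₃, a₄) ∈ F4Params q₀ ↔
      (t < q₀ - 2 ∧ n ≤ t) ∧ a₂ < 2 ∧ a₃ < q₀ ∧ a₄ < q₀ := by
  simp only [F4Params, mem_product, mem_triangle, mem_range]

lemma mem_F6Params {q₀ n a₃ a₄ : ℕ} :
    (⟨n, a₃⟩, a₄) ∈ F6Params q₀ ↔ (n < q₀ - 1 ∧ a₃ ≤ n) ∧ a₄ < q₀ := by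
  simp only [F6Params, mem_product, mem_triangle, mem_range]

lemma bijOn_F4 (q₀ : ℕ) :
    Set.BijOn (fun (⟨⟨t, n⟩, a₂, a₃, a₄⟩ : (Σ _ : ℕ, ℕ) × ℕ × ℕ × ℕ) =>
        digitValue q₀ n (t + 2) a₂ a₃ a₄)
      (F4Params q₀) (F4 q₀ (2 * q₀ ^ 2)) := by
  refine Set.BijOn.mk ?mapsTo ?injOn ?surjOn
  case mapsTo =>
    rintro ⟨⟨t, n⟩, a₂, a₃, a₄⟩ hp
    obtain ⟨⟨ht, hnt⟩, ha₂, ha₃, ha₄⟩ := mem_F4Params.1 hp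
    obtain ⟨a₁, rfl⟩ := Nat.exists_eq_add_of_le' hnt
    have hσ := sum_digits_le (n := n) (b := a₁ + n + 2) (by omega) (by omega) ha₂ ha₃ ha₄
    refine ⟨n, a₁, a₂, a₃, a₄, leadingCoeff q₀ n (a₁ + n + 2) a₂ a₃ a₄, by omega, by omega,
      by omega, by omega, by omega, by rw [leadingCoeff]; omega, ?_⟩
    simp only [digitValue, nuF]
    ring
  case injOn =>
    rintro ⟨⟨t, n⟩, a₂, a₃, a₄⟩ hp ⟨⟨t', n'⟩, a₂', a₃', a₄'⟩ hp' h
    obtain ⟨⟨ht, hnt⟩, ha₂, ha₃, ha₄⟩ := mem_F4Params.1 hp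
    obtain ⟨⟨ht', hnt'⟩, ha₂', ha₃', ha₄'⟩ := mem_F4Params.1 hp'
    obtain ⟨rfl, t_eq, rfl, rfl, rfl⟩ := digitValue_inj (by omega) (by omega) ha₂ ha₃ ha₄
      (by omega) (by omega) ha₂' ha₃' ha₄' h
    obtain rfl := Nat.add_right_cancel t_eq
    rfl
  case surjOn =>
    rintro _ ⟨n, a₁, a₂, a₃, a₄, f, -, ha₁, ha₂, ha₃, ha₄, hσ, rfl⟩
    refine ⟨⟨⟨a₁ + n, n⟩, a₂, a₃, a₄⟩, mem_F4Params.2 (by omega), ?_⟩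
    have hf : leadingCoeff q₀ n (a₁ + n + 2) a₂ a₃ a₄ = f := by rw [leadingCoeff]; omega
    simp only [digitValue, hf, nuF]
    ring

lemma bijOn_F6 (q₀ : ℕ) :
    Set.BijOn (fun (⟨⟨n, a₃⟩, a₄⟩ : (Σ _ : ℕ, ℕ) × ℕ) => digitValue q₀ n (n + 1) 1 a₃ a₄)
      (F6Params q₀) (F6 q₀ (2 * q₀ ^ 2)) := by
  refine Set.BijOn.mk ?mapsTo ?injOn ?surjOn
  case mapsTo =>
    rintro ⟨⟨n, a₃⟩, a₄⟩ hp
    obtain ⟨⟨hn, ha₃⟩, ha₄⟩ := mem_F6Params.1 hp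
    have hσ := sum_digits_le (q₀ := q₀) (n := n) (b := n + 1) (a₃ := a₃) (by omega) (by omega)
      one_lt_two (by omega) ha₄
    refine ⟨n, 0, 0, a₃, a₄, leadingCoeff q₀ n (n + 1) 1 a₃ a₄, rfl, rfl, by omega, by omega,
      by omega, by rw [leadingCoeff]; omega, ?_⟩
    simp only [digitValue, nuF]
    ring
  case injOn =>
    rintro ⟨⟨n, a₃⟩, a₄⟩ hp ⟨⟨n', a₃'⟩, a₄'⟩ hp' h
    obtain ⟨⟨hn, ha₃⟩, ha₄⟩ := mem_F6Params.1 hp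
    obtain ⟨⟨hn', ha₃'⟩, ha₄'⟩ := mem_F6Params.1 hp'
    obtain ⟨rfl, -, -, rfl, rfl⟩ := digitValue_inj (by omega) (by omega) one_lt_two (by omega) ha₄
      (by omega) (by omega) one_lt_two (by omega) ha₄' h
    rfl
  case surjOn =>
    rintro _ ⟨n, _, _, a₃, a₄, f, rfl, rfl, hn, ha₃, ha₄, hσ, rfl⟩
    refine ⟨⟨⟨n, a₃⟩, a₄⟩, mem_F6Params.2 (by omega), ?_⟩
    have hf : leadingCoeff q₀ n (n + 1) 1 a₃ a₄ = f := by rw [leadingCoeff]; omega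
    simp only [digitValue, hf, nuF]
    ring

lemma ncard_F4 (q₀ : ℕ) :
    (F4 q₀ (2 * q₀ ^ 2)).ncard = q₀ ^ 2 * ((q₀ - 1) * (q₀ - 2)) := by
  have htriangle : #(triangle (q₀ - 2)) * 2 = (q₀ - 1) * (q₀ - 2) := by
    obtain hq₀ | hq₀ := le_or_gt q₀ 1
    · simp [card_triangle_mul_two, Nat.sub_eq_zero_of_le (hq₀.trans one_le_two)]
    · rw [card_triangle_mul_two, show q₀ - 2 + 1 = q₀ - 1 by omega]
  calc (F4 q₀ (2 * q₀ ^ 2)).ncard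
      = #(F4Params q₀) := by rw [← (bijOn_F4 q₀).ncard_eq, Set.ncard_coe_finset]
    _ = q₀ ^ 2 * (#(triangle (q₀ - 2)) * 2) := by
        simp only [F4Params, card_product, card_range]
        ring
    _ = q₀ ^ 2 * ((q₀ - 1) * (q₀ - 2)) := by rw [htriangle]

lemma ncard_F6_mul_two (q₀ : ℕ) :
    (F6 q₀ (2 * q₀ ^ 2)).ncard * 2 = q₀ ^ 2 * (q₀ - 1) := by
  calc (F6 q₀ (2 * q₀ ^ 2)).ncard * 2
      = #(F6Params q₀) * 2 := by rw [← (bijOn_F6 q₀).ncard_eq, Set.ncard_coe_finset]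
    _ = q₀ * (#(triangle (q₀ - 1)) * 2) := by
        simp only [F6Params, card_product, card_range]
        ring
    _ = q₀ ^ 2 * (q₀ - 1) := by
        rw [card_triangle_mul_two]
        obtain _ | m := q₀
        · rfl
        · simp only [Nat.add_sub_cancel]
          ring

theorem stmt_19_general (q₀ q : ℕ) (hq₀ : 3 ≤ q₀) (hq : q = 2 * q₀ ^ 2) :
    4 * (F4 q₀ q).ncard = q ^ 2 - 6 * q * q₀ + 4 * q ∧
    4 * (F6 q₀ q).ncard = q * q₀ - q := by
  subst hq
  constructor
  · obtain ⟨m, rfl⟩ := Nat.exists_eq_add_of_le' hq₀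
    have hsub : (2 * (m + 3) ^ 2) ^ 2 - 6 * (2 * (m + 3) ^ 2) * (m + 3) = 4 * (m + 3) ^ 3 * m :=
      Nat.sub_eq_of_eq_add (by ring)
    rw [ncard_F4, hsub, show m + 3 - 1 = m + 2 from rfl, show m + 3 - 2 = m + 1 from rfl]
    ring
  · calc 4 * (F6 q₀ (2 * q₀ ^ 2)).ncard
        = 2 * ((F6 q₀ (2 * q₀ ^ 2)).ncard * 2) := by ring
      _ = 2 * q₀ ^ 2 * (q₀ - 1) := by rw [ncard_F6_mul_two, mul_assoc]
      _ = 2 * q₀ ^ 2 * q₀ - 2 * q₀ ^ 2 := Nat.mul_sub_one _ _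

/-- For `s ≥ 3`, the cardinalities of `F₄` and `F₆` satisfy
`4·|F₄| = q² − 6q·q₀ + 4q` (i.e. `|F₄| = q²/4 − 3q·q₀/2 + q`) and
`4·|F₆| = q·q₀ − q` (i.e. `|F₆| = q·q₀/4 − q/4`). -/
theorem stmt_19 (s : ℕ) (hs : 3 ≤ s) (q₀ q : ℕ)
    (hq₀ : q₀ = 2 ^ s) (hq : q = 2 * q₀ ^ 2) :
    4 * (F4 q₀ q).ncard = q ^ 2 - 6 * q * q₀ + 4 * q ∧
    4 * (F6 q₀ q).ncard = q * q₀ - q :=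
  have three_le_q₀ : 3 ≤ q₀ := hq₀ ▸ hs.trans Nat.lt_two_pow_self.le
  stmt_19_general q₀ q three_le_q₀ hq
end
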